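/- arXiv:2305.01495 — 3 statements merged into one kernel-verified Lean document; each statement's English description precedes it below -/
import Mathlib

section
/- Let n ≥ 3, let f : ℝ → ℝ be continuous with f(0) = 0, and set F(s) = ∫₀ˢ f(σ) dσ. If φ : ℝⁿ → ℝ is a smooth compactly supported solution of −Δφ + f(φ) = 0, then the Pohozaev identity ((n−2)/2) ∫_{ℝⁿ} |∇φ|² dx + n ∫_{ℝⁿ} F(φ) dx = 0 holds. In particular, if F(s) ≥ 0 for all s ∈ ℝ, then φ ≡ 0; that is, no nontrivial stationary solution exists when the potential is nonnegative. -/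
open MeasureTheory Filter

noncomputable section

/-- The Laplacian of a function on `ℝⁿ`, as the sum of second partial derivatives. -/
def lapn (n : ℕ) (u : EuclideanSpace ℝ (Fin n) → ℝ) (x : EuclideanSpace ℝ (Fin n)) : ℝ :=
  ∑ i : Fin n,
    fderiv ℝ (fun y => fderiv ℝ u y (EuclideanSpace.single i 1)) x (EuclideanSpace.single i 1)

/-- The potential `F(s) = ∫₀ˢ f(σ) dσ`. -/
def pot (f : ℝ → ℝ) (s : ℝ) : ℝ := ∫ σ in (0:ℝ)..s, f σ

/-!
The vector field `V = ⟨x, ∇φ⟩ ∇φ - (|∇φ|² / 2 + F(φ)) x` comes from multiplying the equation by the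
generator `⟨x, ∇φ⟩` of dilations. Along solutions
`div V = (1 - n / 2) |∇φ|² - n F(φ)`, and the integral of a compactly supported divergence
vanishes, which is the Pohozaev identity.

If `F ≥ 0` and `n ≥ 2`, both terms of the identity are nonnegative, so `∫ F(φ) = 0` and hence
`F(φ) ≡ 0`. Every value of `φ` is then a minimum of `F`, so `Δφ = f(φ) = 0`, and a compactly
supported harmonic function vanishes because `div (φ ∇φ) = |∇φ|²`. Passing through `F(φ)` rather
than `∇φ` is what makes the argument work in dimension two, where the gradient term of the identity
drops out.
-/

open Module
open scoped Gradient InnerProductSpace Laplacian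

section CompactSupport

lemma eq_zero_of_integral_eq_zero_of_hasCompactSupport {X : Type*} [TopologicalSpace X]
    [MeasurableSpace X] [OpensMeasurableSpace X] {μ : Measure X} [μ.IsOpenPosMeasure]
    [IsFiniteMeasureOnCompacts μ] {g : X → ℝ} (hg : Continuous g) (hsupp : HasCompactSupport g)
    (hnonneg : ∀ x, 0 ≤ g x) (hintegral : ∫ x, g x ∂μ = 0) (x : X) : g x = 0 := by
  by_contra hx
  exact (hg.integral_pos_of_hasCompactSupport_nonneg_nonzero hsupp hnonneg hx).ne' hintegral

lemma eq_zero_of_fderiv_eq_zero_of_hasCompactSupport {E F : Type*} [NormedAddCommGroup E]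
    [NormedSpace ℝ E] [Nontrivial E] [NormedAddCommGroup F] [NormedSpace ℝ F] {g : E → F}
    (hg : Differentiable ℝ g) (hsupp : HasCompactSupport g) (hfderiv : ∀ x, fderiv ℝ g x = 0) :
    g = 0 := by
  have : NoncompactSpace E := NormedSpace.noncompactSpace ℝ E
  obtain ⟨y, hy⟩ : ∃ y, y ∉ tsupport g :=
    (Set.ne_univ_iff_exists_notMem _).1 hsupp.isCompact.ne_univ
  ext x
  rw [is_const_of_fderiv_eq_zero hg hfderiv x y, image_eq_zero_of_notMem_tsupport hy, Pi.zero_apply]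

end CompactSupport

section Gradient

variable {E : Type*} [NormedAddCommGroup E] [InnerProductSpace ℝ E] [CompleteSpace E]
  {φ : E → ℝ} {x : E}

/-- The Riesz isomorphism as an `ℝ`-linear equivalence, so that the chain rule applies to
`∇ φ = rieszEquiv E ∘ fderiv ℝ φ`. Mathlib's `InnerProductSpace.toDual` is conjugate-linear, and
conjugation on `ℝ` is the identity by definition. -/
def rieszEquiv (E : Type*) [NormedAddCommGroup E] [InnerProductSpace ℝ E] [CompleteSpace E] :
    StrongDual ℝ E ≃L[ℝ] E :=
  (InnerProductSpace.toDual ℝ E).symm.toContinuousLinearEquiv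

lemma gradient_eq_rieszEquiv_comp_fderiv (φ : E → ℝ) : ∇ φ = rieszEquiv E ∘ fderiv ℝ φ :=
  rfl

lemma inner_rieszEquiv_left (l : StrongDual ℝ E) (v : E) : ⟪rieszEquiv E l, v⟫_ℝ = l v :=
  InnerProductSpace.toDual_symm_apply

lemma contDiff_gradient {k : WithTop ℕ∞} (hφ : ContDiff ℝ (k + 1) φ) : ContDiff ℝ k (∇ φ) :=
  (rieszEquiv E).contDiff.comp (hφ.fderiv_right le_rfl)

lemma differentiableAt_gradient (hφ : ContDiffAt ℝ 2 φ x) : DifferentiableAt ℝ (∇ φ) x :=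
  (rieszEquiv E).differentiableAt.comp x
    ((hφ.fderiv_right (m := 1) (by norm_num)).differentiableAt one_ne_zero)

lemma hasCompactSupport_gradient (hφ : HasCompactSupport φ) : HasCompactSupport (∇ φ) :=
  (hφ.fderiv (𝕜 := ℝ)).comp_left (map_zero (rieszEquiv E))

lemma hasCompactSupport_norm_sq_gradient (hφ : HasCompactSupport φ) :
    HasCompactSupport (fun x => ‖∇ φ x‖ ^ 2) :=
  (hasCompactSupport_gradient hφ).comp_left (g := fun v => ‖v‖ ^ 2) (by simp)

lemma inner_fderiv_gradient_left (v w : E) :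
    ⟪fderiv ℝ (∇ φ) x v, w⟫_ℝ = fderiv ℝ (fderiv ℝ φ) x v w := by
  rw [gradient_eq_rieszEquiv_comp_fderiv, ContinuousLinearEquiv.comp_fderiv]
  exact inner_rieszEquiv_left _ w

lemma inner_fderiv_gradient_comm (hφ : ContDiffAt ℝ 2 φ x) (v w : E) :
    ⟪fderiv ℝ (∇ φ) x v, w⟫_ℝ = ⟪fderiv ℝ (∇ φ) x w, v⟫_ℝ := by
  rw [inner_fderiv_gradient_left, inner_fderiv_gradient_left]
  exact hφ.isSymmSndFDerivAt (by simp) v w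

lemma fderiv_inner_id_gradient_apply (hgrad : DifferentiableAt ℝ (∇ φ) x) (v : E) :
    fderiv ℝ (fun y => ⟪y, ∇ φ y⟫_ℝ) x v = ⟪∇ φ x, v⟫_ℝ + ⟪fderiv ℝ (∇ φ) x v, x⟫_ℝ := by
  rw [fderiv_inner_apply ℝ differentiableAt_fun_id hgrad, fderiv_fun_id,
    ContinuousLinearMap.id_apply, real_inner_comm v, real_inner_comm x, add_comm]

end Gradient

section Divergence

variable {E F : Type*} [NormedAddCommGroup E] [NormedSpace ℝ E]
  [NormedAddCommGroup F] [NormedSpace ℝ F]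

/-- The divergence of a vector field, as the trace of its derivative. It takes the value `0` where
the field is not differentiable. -/
def divergence (V : E → E) (x : E) : ℝ := LinearMap.trace ℝ E (fderiv ℝ V x)

lemma divergence_sub {V W : E → E} {x : E} (hV : DifferentiableAt ℝ V x)
    (hW : DifferentiableAt ℝ W x) :
    divergence (fun y => V y - W y) x = divergence V x - divergence W x := by
  rw [divergence, fderiv_fun_sub hV hW, ContinuousLinearMap.toLinearMap_sub, map_sub, divergence,
    divergence]

variable [FiniteDimensional ℝ E]

lemma divergence_id (x : E) : divergence (fun y => y) x = finrank ℝ E := by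
  rw [divergence, fderiv_fun_id]
  exact LinearMap.trace_id ℝ E

lemma divergence_smul {u : E → ℝ} {V : E → E} {x : E} (hu : DifferentiableAt ℝ u x)
    (hV : DifferentiableAt ℝ V x) :
    divergence (fun y => u y • V y) x = u x * divergence V x + fderiv ℝ u x (V x) := by
  have htrace : LinearMap.trace ℝ E ((fderiv ℝ u x).smulRight (V x)) = fderiv ℝ u x (V x) :=
    LinearMap.trace_smulRight (fderiv ℝ u x : E →ₗ[ℝ] ℝ) (V x)
  rw [divergence, fderiv_fun_smul hu hV, ContinuousLinearMap.toLinearMap_add, map_add, htrace,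
    ContinuousLinearMap.toLinearMap_smul, map_smul, smul_eq_mul, divergence]

variable [MeasurableSpace E] [BorelSpace E] (μ : Measure E) [μ.IsAddHaarMeasure]

lemma integral_fderiv_eq_zero {g : E → F} (hg : ContDiff ℝ 1 g) (hsupp : HasCompactSupport g) :
    ∫ x, fderiv ℝ g x ∂μ = 0 := by
  have hint : Integrable (fderiv ℝ g) μ :=
    (hg.continuous_fderiv one_ne_zero).integrable_of_hasCompactSupport (hsupp.fderiv (𝕜 := ℝ))
  ext v
  have hparts := integral_smul_fderiv_eq_neg_fderiv_smul_of_integrable (𝕜 := ℝ) (μ := μ)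
    (f := fun _ : E => (1 : ℝ)) (g := g) (v := v)
    (by simp) (by simpa using hint.apply_continuousLinearMap v)
    (by simpa using hg.continuous.integrable_of_hasCompactSupport hsupp)
    (fun x _ => differentiableAt_const _) (fun x _ => hg.differentiable one_ne_zero x)
  rw [ContinuousLinearMap.integral_apply hint]
  simpa using hparts

theorem integral_divergence_eq_zero {V : E → E} (hV : ContDiff ℝ 1 V)
    (hsupp : HasCompactSupport V) : ∫ x, divergence V x ∂μ = 0 := by
  let traceCLM : (E →L[ℝ] E) →L[ℝ] ℝ :=
    LinearMap.toContinuousLinearMap (LinearMap.trace ℝ E ∘ₗ ContinuousLinearMap.coeLM ℝ)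
  have hint : Integrable (fderiv ℝ V) μ :=
    (hV.continuous_fderiv one_ne_zero).integrable_of_hasCompactSupport (hsupp.fderiv (𝕜 := ℝ))
  calc ∫ x, divergence V x ∂μ = traceCLM (∫ x, fderiv ℝ V x ∂μ) :=
        traceCLM.integral_comp_comm hint
    _ = 0 := by rw [integral_fderiv_eq_zero μ hV hsupp, map_zero]

end Divergence

section Laplacian

variable {E : Type*} [NormedAddCommGroup E] [InnerProductSpace ℝ E] [FiniteDimensional ℝ E]
  {φ : E → ℝ}

lemma divergence_gradient (φ : E → ℝ) (x : E) : divergence (∇ φ) x = Δ φ x := by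
  let b := stdOrthonormalBasis ℝ E
  rw [divergence, LinearMap.trace_eq_sum_inner _ b,
    InnerProductSpace.laplacian_eq_iteratedFDeriv_orthonormalBasis φ b]
  refine Finset.sum_congr rfl fun i _ => ?_
  rw [real_inner_comm, iteratedFDeriv_two_apply]
  exact inner_fderiv_gradient_left _ _

lemma lapn_eq_laplacian {n : ℕ} {u : EuclideanSpace ℝ (Fin n) → ℝ} {x : EuclideanSpace ℝ (Fin n)}
    (hu : ContDiffAt ℝ 2 u x) : lapn n u x = Δ u x := by
  have hd : DifferentiableAt ℝ (fderiv ℝ u) x :=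
    (hu.fderiv_right (m := 1) (by norm_num)).differentiableAt (by norm_num)
  rw [lapn, InnerProductSpace.laplacian_eq_iteratedFDeriv_orthonormalBasis u
    (EuclideanSpace.basisFun (Fin n) ℝ)]
  refine Finset.sum_congr rfl fun i _ => ?_
  rw [fderiv_clm_apply hd (differentiableAt_const _)]
  simp [iteratedFDeriv_two_apply]

theorem eq_zero_of_laplacian_eq_zero_of_hasCompactSupport [Nontrivial E] (hφ : ContDiff ℝ 2 φ)
    (hsupp : HasCompactSupport φ) (hharm : ∀ x, Δ φ x = 0) : φ = 0 := by
  borelize E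
  have hφ₁ : ContDiff ℝ 1 φ := hφ.of_le one_le_two
  have hgrad : ContDiff ℝ 1 (∇ φ) := contDiff_gradient hφ
  have hdiv (x : E) : divergence (fun y => φ y • ∇ φ y) x = ‖∇ φ x‖ ^ 2 := by
    rw [divergence_smul (hφ₁.differentiable one_ne_zero x) (hgrad.differentiable one_ne_zero x),
      divergence_gradient, hharm, mul_zero, zero_add, ← inner_gradient_left,
      real_inner_self_eq_norm_sq]
  have hintegral : ∫ x, ‖∇ φ x‖ ^ 2 ∂Measure.addHaar = 0 := by
    simp only [← hdiv]
    exact integral_divergence_eq_zero Measure.addHaar (hφ₁.smul hgrad) hsupp.smul_right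
  have hnorm (x : E) : ‖∇ φ x‖ ^ 2 = 0 :=
    eq_zero_of_integral_eq_zero_of_hasCompactSupport (hgrad.continuous.norm.pow 2)
      (hasCompactSupport_norm_sq_gradient hsupp) (fun y => sq_nonneg ‖∇ φ y‖) hintegral x
  refine eq_zero_of_fderiv_eq_zero_of_hasCompactSupport (hφ₁.differentiable one_ne_zero) hsupp
    fun x => ?_
  rw [← toDual_gradient, norm_eq_zero.1 (pow_eq_zero_iff two_ne_zero |>.1 (hnorm x)), map_zero]

end Laplacian

section Potential

variable {f : ℝ → ℝ}

lemma deriv_pot (hf : Continuous f) : deriv (pot f) = f :=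
  funext (hf.deriv_integral f 0)

lemma contDiff_pot (hf : Continuous f) : ContDiff ℝ 1 (pot f) := by
  refine contDiff_one_iff_deriv.2 ⟨fun s => ?_, by rwa [deriv_pot hf]⟩
  exact (hf.integral_hasStrictDerivAt 0 s).hasDerivAt.differentiableAt

end Potential

section PohozaevField

variable {E : Type*} [NormedAddCommGroup E] [InnerProductSpace ℝ E] [CompleteSpace E]
  {F : ℝ → ℝ} {φ : E → ℝ} {x : E}

/-- The energy density `|∇φ|² / 2 + F(φ)`, whose Euler–Lagrange equation is `Δφ = F'(φ)`. -/
def energyDensity (F : ℝ → ℝ) (φ : E → ℝ) (x : E) : ℝ := ‖∇ φ x‖ ^ 2 / 2 + F (φ x)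

/-- The Noether current `⟨x, ∇φ⟩ ∇φ - (|∇φ|² / 2 + F(φ)) x` of the dilations `φ ↦ φ(λ ·)`. Along
solutions its divergence is minus the integrand of the Pohozaev identity. -/
def pohozaevField (F : ℝ → ℝ) (φ : E → ℝ) (x : E) : E :=
  ⟪x, ∇ φ x⟫_ℝ • ∇ φ x - energyDensity F φ x • x

lemma contDiff_energyDensity (hF : ContDiff ℝ 1 F) (hφ : ContDiff ℝ 2 φ) :
    ContDiff ℝ 1 (energyDensity F φ) :=
  (((contDiff_gradient hφ).norm_sq ℝ).div_const 2).add (hF.comp (hφ.of_le one_le_two))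

lemma contDiff_pohozaevField (hF : ContDiff ℝ 1 F) (hφ : ContDiff ℝ 2 φ) :
    ContDiff ℝ 1 (pohozaevField F φ) :=
  ((contDiff_id.inner ℝ (contDiff_gradient hφ)).smul (contDiff_gradient hφ)).sub
    ((contDiff_energyDensity hF hφ).smul contDiff_id)

lemma hasCompactSupport_pohozaevField (hF0 : F 0 = 0) (hsupp : HasCompactSupport φ) :
    HasCompactSupport (pohozaevField F φ) := by
  have henergy : HasCompactSupport (energyDensity F φ) :=
    ((hasCompactSupport_norm_sq_gradient hsupp).comp_left (g := fun t => t / 2) (by simp)).add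
      (hsupp.comp_left hF0)
  exact (hasCompactSupport_gradient hsupp).smul_left.sub henergy.smul_right

lemma hasFDerivAt_energyDensity (hF : DifferentiableAt ℝ F (φ x)) (hφ : DifferentiableAt ℝ φ x)
    (hgrad : DifferentiableAt ℝ (∇ φ) x) :
    HasFDerivAt (energyDensity F φ)
      (innerSL ℝ (∇ φ x) ∘L fderiv ℝ (∇ φ) x + deriv F (φ x) • fderiv ℝ φ x) x := by
  have hkinetic : HasFDerivAt (fun y => ‖∇ φ y‖ ^ 2 / 2)
      (innerSL ℝ (∇ φ x) ∘L fderiv ℝ (∇ φ) x) x := by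
    convert! hgrad.hasFDerivAt.norm_sq.mul_const (2⁻¹ : ℝ) using 1
    module
  exact hkinetic.add (hF.hasDerivAt.comp_hasFDerivAt x hφ.hasFDerivAt)

end PohozaevField

section Pohozaev

variable {E : Type*} [NormedAddCommGroup E] [InnerProductSpace ℝ E] [FiniteDimensional ℝ E]
  {F : ℝ → ℝ} {φ : E → ℝ} {x : E}

-- The second derivatives of `φ` cancel by symmetry of the Hessian, and the radial terms by `heq`.
lemma divergence_pohozaevField (hF : DifferentiableAt ℝ F (φ x)) (hφ : ContDiffAt ℝ 2 φ x)
    (heq : Δ φ x = deriv F (φ x)) :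
    divergence (pohozaevField F φ) x =
      (1 - finrank ℝ E / 2) * ‖∇ φ x‖ ^ 2 - finrank ℝ E * F (φ x) := by
  have hgrad : DifferentiableAt ℝ (∇ φ) x := differentiableAt_gradient hφ
  have hradial : DifferentiableAt ℝ (fun y => ⟪y, ∇ φ y⟫_ℝ) x :=
    differentiableAt_fun_id.inner ℝ hgrad
  have henergy := hasFDerivAt_energyDensity hF (hφ.differentiableAt two_ne_zero) hgrad
  have hradial_grad : fderiv ℝ (fun y => ⟪y, ∇ φ y⟫_ℝ) x (∇ φ x) =
      ‖∇ φ x‖ ^ 2 + ⟪fderiv ℝ (∇ φ) x (∇ φ x), x⟫_ℝ := by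
    rw [fderiv_inner_id_gradient_apply hgrad, real_inner_self_eq_norm_sq]
  have henergy_radial : fderiv ℝ (energyDensity F φ) x x =
      ⟪fderiv ℝ (∇ φ) x x, ∇ φ x⟫_ℝ + deriv F (φ x) * ⟪x, ∇ φ x⟫_ℝ := by
    simp [henergy.fderiv, inner_gradient_right]
  calc divergence (pohozaevField F φ) x
      = ⟪x, ∇ φ x⟫_ℝ * Δ φ x + fderiv ℝ (fun y => ⟪y, ∇ φ y⟫_ℝ) x (∇ φ x)
        - (energyDensity F φ x * finrank ℝ E + fderiv ℝ (energyDensity F φ) x x) := by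
        unfold pohozaevField
        rw [divergence_sub (hradial.fun_smul hgrad)
            (henergy.differentiableAt.fun_smul differentiableAt_fun_id),
          divergence_smul hradial hgrad,
          divergence_smul henergy.differentiableAt differentiableAt_fun_id,
          divergence_gradient, divergence_id]
    _ = (1 - finrank ℝ E / 2) * ‖∇ φ x‖ ^ 2 - finrank ℝ E * F (φ x) := by
        rw [hradial_grad, henergy_radial, heq, inner_fderiv_gradient_comm hφ, energyDensity]
        ring

variable [MeasurableSpace E] [BorelSpace E] (μ : Measure E) [μ.IsAddHaarMeasure]

theorem pohozaev_identity (hF : ContDiff ℝ 1 F) (hF0 : F 0 = 0) (hφ : ContDiff ℝ 2 φ)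
    (hsupp : HasCompactSupport φ) (heq : ∀ x, Δ φ x = deriv F (φ x)) :
    ((finrank ℝ E : ℝ) - 2) / 2 * ∫ x, ‖∇ φ x‖ ^ 2 ∂μ + finrank ℝ E * ∫ x, F (φ x) ∂μ = 0 := by
  have hgrad_int : Integrable (fun x => ‖∇ φ x‖ ^ 2) μ :=
    ((contDiff_gradient (k := 1) hφ).continuous.norm.pow 2).integrable_of_hasCompactSupport
      (hasCompactSupport_norm_sq_gradient hsupp)
  have hF_int : Integrable (fun x => F (φ x)) μ :=
    (hF.continuous.comp hφ.continuous).integrable_of_hasCompactSupport (hsupp.comp_left hF0)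
  have hflux :
      (1 - finrank ℝ E / 2) * ∫ x, ‖∇ φ x‖ ^ 2 ∂μ - finrank ℝ E * ∫ x, F (φ x) ∂μ = 0 := by
    rw [← integral_const_mul, ← integral_const_mul,
      ← integral_sub (hgrad_int.const_mul _) (hF_int.const_mul _)]
    have hdiv (x : E) :=
      divergence_pohozaevField (hF.differentiable one_ne_zero _) hφ.contDiffAt (heq x)
    simpa only [hdiv] using
      integral_divergence_eq_zero μ (contDiff_pohozaevField hF hφ)
        (hasCompactSupport_pohozaevField hF0 hsupp)
  linarith

theorem eq_zero_of_laplacian_eq_deriv_of_nonneg (hdim : 2 ≤ finrank ℝ E) (hF : ContDiff ℝ 1 F)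
    (hF0 : F 0 = 0) (hFnonneg : ∀ s, 0 ≤ F s) (hφ : ContDiff ℝ 2 φ)
    (hsupp : HasCompactSupport φ) (heq : ∀ x, Δ φ x = deriv F (φ x)) : φ = 0 := by
  borelize E
  let μ : Measure E := Measure.addHaar
  have hdim' : (2 : ℝ) ≤ finrank ℝ E := by exact_mod_cast hdim
  have hF_integral : ∫ x, F (φ x) ∂μ = 0 := by
    have hgrad_nonneg : 0 ≤ ((finrank ℝ E : ℝ) - 2) / 2 * ∫ x, ‖∇ φ x‖ ^ 2 ∂μ :=
      mul_nonneg (by linarith) (integral_nonneg fun x => sq_nonneg _)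
    have hpot_nonneg : 0 ≤ ∫ x, F (φ x) ∂μ := integral_nonneg fun x => hFnonneg _
    nlinarith only [hdim', hgrad_nonneg, hpot_nonneg, pohozaev_identity μ hF hF0 hφ hsupp heq]
  have hF_comp (x : E) : F (φ x) = 0 :=
    eq_zero_of_integral_eq_zero_of_hasCompactSupport (hF.continuous.comp hφ.continuous)
      (hsupp.comp_left hF0) (fun y => hFnonneg (φ y)) hF_integral x
  have hderiv (x : E) : deriv F (φ x) = 0 := by
    have hmin : IsLocalMin F (φ x) := .of_forall fun s => by simpa only [hF_comp] using hFnonneg s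
    exact hmin.deriv_eq_zero
  have : Nontrivial E := nontrivial_of_finrank_pos (R := ℝ) (by lia)
  exact eq_zero_of_laplacian_eq_zero_of_hasCompactSupport hφ hsupp fun x => (heq x).trans (hderiv x)

theorem pohozaev_no_stationary_solutions_general {f : ℝ → ℝ} (hf : Continuous f)
    (hφ : ContDiff ℝ 2 φ) (hsupp : HasCompactSupport φ) (heq : ∀ x, -Δ φ x + f (φ x) = 0) :
    ((finrank ℝ E : ℝ) - 2) / 2 * ∫ x, ‖∇ φ x‖ ^ 2 ∂μ + finrank ℝ E * ∫ x, pot f (φ x) ∂μ = 0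
    ∧ (2 ≤ finrank ℝ E → (∀ s, 0 ≤ pot f s) → φ = 0) := by
  have hpot : ContDiff ℝ 1 (pot f) := contDiff_pot hf
  have hpot0 : pot f 0 = 0 := intervalIntegral.integral_same
  have heq' (x : E) : Δ φ x = deriv (pot f) (φ x) := by
    rw [deriv_pot hf]
    linarith [heq x]
  exact ⟨pohozaev_identity μ hpot hpot0 hφ hsupp heq', fun hdim hnonneg =>
    eq_zero_of_laplacian_eq_deriv_of_nonneg hdim hpot hpot0 hnonneg hφ hsupp heq'⟩

end Pohozaev

/-- Pohozaev identity: a smooth compactly supported solution of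
`-Δφ + f(φ) = 0` on `ℝⁿ`, `n ≥ 3`, satisfies
`((n-2)/2) ∫ |∇φ|² + n ∫ F(φ) = 0`; in particular if `F ≥ 0` then `φ ≡ 0`. -/
theorem pohozaev_no_stationary_solutions
    (n : ℕ) (hn : 3 ≤ n)
    (f : ℝ → ℝ) (hf : Continuous f) (hf0 : f 0 = 0)
    (φ : EuclideanSpace ℝ (Fin n) → ℝ)
    (hφ : ContDiff ℝ (⊤ : ℕ∞) φ) (hsupp : HasCompactSupport φ)
    (heq : ∀ x : EuclideanSpace ℝ (Fin n), -lapn n φ x + f (φ x) = 0) :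
    ((n : ℝ) - 2) / 2 * (∫ x : EuclideanSpace ℝ (Fin n), ‖gradient φ x‖ ^ 2)
      + (n : ℝ) * (∫ x : EuclideanSpace ℝ (Fin n), pot f (φ x)) = 0
    ∧ ((∀ s : ℝ, 0 ≤ pot f s) → ∀ x : EuclideanSpace ℝ (Fin n), φ x = 0) := by
  have hφ₂ : ContDiff ℝ 2 φ := contDiff_infty.1 hφ 2
  have hmain := pohozaev_no_stationary_solutions_general volume hf hφ₂ hsupp
    fun x => lapn_eq_laplacian hφ₂.contDiffAt ▸ heq x
  rw [finrank_euclideanSpace_fin] at hmain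
  exact ⟨hmain.1, fun hF x => congrFun (hmain.2 (by lia) hF) x⟩

end
end

section
/- There exists a universal constant C > 0 such that for every smooth compactly supported radial function u : ℝ³ → ℝ with radial profile v (i.e. u(x) = v(|x|)), one has r·|v(r)| ≤ C · ( ∫_{ℝ³} (u(x)² + |∇u(x)|²) dx )^{1/2} for all r ≥ 0. -/
open MeasureTheory Filter

noncomputable section

/-- Euclidean space `ℝ³`. -/
abbrev E3 : Type := EuclideanSpace ℝ (Fin 3)

/-!
On the half-line, `‖v r‖² = -∫_r^∞ (‖v‖²)' = -∫_r^∞ 2⟪v, v'⟫ ≤ ∫_r^∞ (‖v‖² + ‖v'‖²)`: square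
integrability of `v` and `v'` makes `‖v‖²` and its derivative integrable, so `‖v‖²` vanishes at
infinity. A nonnegative increasing weight `ρ` can be inserted, because `ρ r ≤ ρ t` for `t ≥ r`.
In dimension `n` take `ρ t = tⁿ⁻¹`, the density of polar coordinates; the derivative of the profile
is a directional derivative of `u`, so the weighted integral is at most the integral of
`‖u‖² + ‖Du‖²` divided by the area of the unit sphere.
-/

section HalfLine

open Set

variable {F : Type*} [NormedAddCommGroup F] [InnerProductSpace ℝ F]

lemma abs_two_mul_inner_le_norm_sq_add_norm_sq (x y : F) :
    |2 * inner ℝ x y| ≤ ‖x‖ ^ 2 + ‖y‖ ^ 2 := by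
  calc |2 * inner ℝ x y| = 2 * |inner ℝ x y| := by rw [abs_mul, abs_two]
    _ ≤ 2 * (‖x‖ * ‖y‖) := by gcongr; exact abs_real_inner_le_norm x y
    _ ≤ ‖x‖ ^ 2 + ‖y‖ ^ 2 := by linarith [two_mul_le_add_sq ‖x‖ ‖y‖]

variable [CompleteSpace F] {v : ℝ → F} {r : ℝ}

lemma norm_sq_le_integral_Ioi_norm_sq_add_norm_deriv_sq
    (hcont : ContinuousWithinAt v (Ici r) r) (hdiff : ∀ t ∈ Ioi r, DifferentiableAt ℝ v t)
    (hint : IntegrableOn (fun t ↦ ‖v t‖ ^ 2 + ‖deriv v t‖ ^ 2) (Ioi r)) :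
    ‖v r‖ ^ 2 ≤ ∫ t in Ioi r, (‖v t‖ ^ 2 + ‖deriv v t‖ ^ 2) := by
  have hv_meas : AEStronglyMeasurable v (volume.restrict (Ioi r)) :=
    ContinuousOn.aestronglyMeasurable (fun t ht ↦ (hdiff t ht).continuousAt.continuousWithinAt)
      measurableSet_Ioi
  have hv'_meas : AEStronglyMeasurable (deriv v) (volume.restrict (Ioi r)) :=
    aestronglyMeasurable_deriv v _
  have hsq_deriv : ∀ t ∈ Ioi r, HasDerivAt (‖v ·‖ ^ 2) (2 * inner ℝ (v t) (deriv v t)) t :=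
    fun t ht ↦ (hdiff t ht).hasDerivAt.norm_sq
  have hsq_int : IntegrableOn (fun t ↦ ‖v t‖ ^ 2) (Ioi r) :=
    hint.mono' (hv_meas.norm.pow 2) (.of_forall fun t ↦ by
      rw [Real.norm_of_nonneg (by positivity)]
      exact le_add_of_nonneg_right (by positivity))
  have hinner_int : IntegrableOn (fun t ↦ 2 * inner ℝ (v t) (deriv v t)) (Ioi r) :=
    hint.mono' ((hv_meas.inner hv'_meas).const_mul 2)
      (.of_forall fun t ↦ abs_two_mul_inner_le_norm_sq_add_norm_sq _ _)
  have hsq_tendsto : Tendsto (‖v ·‖ ^ 2) atTop (nhds 0) :=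
    tendsto_zero_of_hasDerivAt_of_integrableOn_Ioi hsq_deriv hinner_int hsq_int
  have hftc : ∫ t in Ioi r, 2 * inner ℝ (v t) (deriv v t) = 0 - ‖v r‖ ^ 2 :=
    integral_Ioi_of_hasDerivAt_of_tendsto (hcont.norm.pow 2) hsq_deriv hinner_int hsq_tendsto
  calc ‖v r‖ ^ 2 = ∫ t in Ioi r, -(2 * inner ℝ (v t) (deriv v t)) := by
        rw [integral_neg, hftc, zero_sub, neg_neg]
    _ ≤ ∫ t in Ioi r, (‖v t‖ ^ 2 + ‖deriv v t‖ ^ 2) :=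
        integral_mono hinner_int.neg hint fun t ↦
          (neg_le_abs _).trans (abs_two_mul_inner_le_norm_sq_add_norm_sq _ _)

lemma mul_norm_sq_le_integral_Ioi_of_monotoneOn {ρ : ℝ → ℝ}
    (hρ : MonotoneOn ρ (Ici r)) (hρr : 0 ≤ ρ r)
    (hcont : ContinuousWithinAt v (Ici r) r) (hdiff : ∀ t ∈ Ioi r, DifferentiableAt ℝ v t)
    (hint : IntegrableOn (fun t ↦ ρ t * (‖v t‖ ^ 2 + ‖deriv v t‖ ^ 2)) (Ioi r)) :
    ρ r * ‖v r‖ ^ 2 ≤ ∫ t in Ioi r, ρ t * (‖v t‖ ^ 2 + ‖deriv v t‖ ^ 2) := by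
  have hle : ∀ t ∈ Ioi r, ρ r * (‖v t‖ ^ 2 + ‖deriv v t‖ ^ 2) ≤
      ρ t * (‖v t‖ ^ 2 + ‖deriv v t‖ ^ 2) := fun t ht ↦
    mul_le_mul_of_nonneg_right (hρ self_mem_Ici (mem_Ici_of_Ioi ht) (le_of_lt ht)) (by positivity)
  have hconst_int : IntegrableOn (fun t ↦ ρ r * (‖v t‖ ^ 2 + ‖deriv v t‖ ^ 2)) (Ioi r) := by
    have hv_meas : AEStronglyMeasurable v (volume.restrict (Ioi r)) :=
      ContinuousOn.aestronglyMeasurable (fun t ht ↦ (hdiff t ht).continuousAt.continuousWithinAt)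
        measurableSet_Ioi
    refine hint.mono' (((hv_meas.norm.pow 2).add
      ((aestronglyMeasurable_deriv v _).norm.pow 2)).const_mul (ρ r)) ?_
    filter_upwards [ae_restrict_mem measurableSet_Ioi] with t ht
    rw [Real.norm_of_nonneg (by positivity)]
    exact hle t ht
  calc ρ r * ‖v r‖ ^ 2 ≤ ρ r * ∫ t in Ioi r, (‖v t‖ ^ 2 + ‖deriv v t‖ ^ 2) := by
        rcases hρr.eq_or_lt with hzero | hpos
        · simp only [← hzero, zero_mul, le_refl]
        · gcongr
          exact norm_sq_le_integral_Ioi_norm_sq_add_norm_deriv_sq hcont hdiff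
            ((integrable_const_mul_iff hpos.ne'.isUnit _).1 hconst_int)
    _ = ∫ t in Ioi r, ρ r * (‖v t‖ ^ 2 + ‖deriv v t‖ ^ 2) := (integral_const_mul _ _).symm
    _ ≤ ∫ t in Ioi r, ρ t * (‖v t‖ ^ 2 + ‖deriv v t‖ ^ 2) :=
        setIntegral_mono_on hconst_int hint measurableSet_Ioi hle

end HalfLine

section RadialProfile

open Set Metric Module NormedSpace

variable {E F : Type*} [NormedAddCommGroup E] [NormedSpace ℝ E] [NormedAddCommGroup F]
  {u : E → F} {v : ℝ → F}

lemma continuousOn_Ici_of_radial [Nontrivial E] (huv : ∀ x, u x = v ‖x‖) (hu : Continuous u) :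
    ContinuousOn v (Ici 0) := by
  obtain ⟨e, he⟩ := exists_norm_eq E zero_le_one
  have hray : Continuous fun t : ℝ ↦ u (t • e) := by fun_prop
  refine hray.continuousOn.congr fun t ht ↦ ?_
  simp only [huv, norm_smul, he, mul_one, Real.norm_of_nonneg ht]

variable [NormedSpace ℝ F]

lemma hasDerivAt_of_radial {x : E} (huv : ∀ x, u x = v ‖x‖) (hx : x ≠ 0)
    (hu : DifferentiableAt ℝ u x) : HasDerivAt v (fderiv ℝ u x (normalize x)) ‖x‖ := by
  have hray : HasDerivAt (fun t : ℝ ↦ t • normalize x) (normalize x) ‖x‖ := by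
    simpa only [id, one_smul] using (hasDerivAt_id ‖x‖).smul_const (normalize x)
  have hcomp : HasDerivAt (fun t : ℝ ↦ u (t • normalize x)) (fderiv ℝ u x (normalize x)) ‖x‖ :=
    hu.hasFDerivAt.comp_hasDerivAt_of_eq _ hray (norm_smul_normalize x).symm
  refine hcomp.congr_of_eventuallyEq ?_
  filter_upwards [lt_mem_nhds (norm_pos_iff.2 hx)] with t ht
  rw [huv, norm_smul, norm_normalize hx, mul_one, Real.norm_of_nonneg ht.le]

lemma differentiableAt_of_radial [Nontrivial E] (huv : ∀ x, u x = v ‖x‖)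
    (hu : Differentiable ℝ u) {t : ℝ} (ht : 0 < t) : DifferentiableAt ℝ v t := by
  obtain ⟨x, rfl⟩ := exists_norm_eq E ht.le
  exact (hasDerivAt_of_radial huv (norm_pos_iff.1 ht) (hu x)).differentiableAt

lemma norm_deriv_le_norm_fderiv_of_radial {x : E} (huv : ∀ x, u x = v ‖x‖) (hx : x ≠ 0)
    (hu : DifferentiableAt ℝ u x) : ‖deriv v ‖x‖‖ ≤ ‖fderiv ℝ u x‖ := by
  rw [(hasDerivAt_of_radial huv hx hu).deriv]
  exact (fderiv ℝ u x).unit_le_opNorm _ (norm_normalize hx).le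

variable [MeasurableSpace E] {μ : Measure E}

lemma ae_norm_sq_add_norm_deriv_sq_le_of_radial [NullSingletonClass μ] (huv : ∀ x, u x = v ‖x‖)
    (hu : Differentiable ℝ u) :
    ∀ᵐ x ∂μ, ‖v ‖x‖‖ ^ 2 + ‖deriv v ‖x‖‖ ^ 2 ≤ ‖u x‖ ^ 2 + ‖fderiv ℝ u x‖ ^ 2 := by
  filter_upwards [Measure.ae_ne μ 0] with x hx
  rw [huv x]
  gcongr
  exact norm_deriv_le_norm_fderiv_of_radial huv hx (hu x)

variable [CompleteSpace F]

lemma integrable_norm_sq_add_norm_deriv_sq_of_radial [OpensMeasurableSpace E] [NullSingletonClass μ]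
    (huv : ∀ x, u x = v ‖x‖) (hu : Differentiable ℝ u)
    (hint : Integrable (fun x ↦ ‖u x‖ ^ 2 + ‖fderiv ℝ u x‖ ^ 2) μ) :
    Integrable (fun x ↦ ‖v ‖x‖‖ ^ 2 + ‖deriv v ‖x‖‖ ^ 2) μ := by
  have hv_norm_meas : StronglyMeasurable fun x : E ↦ ‖v ‖x‖‖ := by
    simpa only [← huv] using hu.continuous.norm.stronglyMeasurable
  have hv'_meas : StronglyMeasurable fun x : E ↦ deriv v ‖x‖ :=
    (stronglyMeasurable_deriv v).comp_measurable measurable_norm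
  refine hint.mono' ((hv_norm_meas.pow 2).add (hv'_meas.norm.pow 2)).aestronglyMeasurable ?_
  filter_upwards [ae_norm_sq_add_norm_deriv_sq_le_of_radial huv hu] with x hx
  rwa [Real.norm_of_nonneg (by positivity)]

variable [BorelSpace E] [FiniteDimensional ℝ E] [Nontrivial E] [μ.IsAddHaarMeasure]

lemma integrableOn_Ioi_pow_mul_norm_sq_add_norm_deriv_sq_of_radial (huv : ∀ x, u x = v ‖x‖)
    (hu : Differentiable ℝ u)
    (hint : Integrable (fun x ↦ ‖u x‖ ^ 2 + ‖fderiv ℝ u x‖ ^ 2) μ) :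
    IntegrableOn (fun t ↦ t ^ (finrank ℝ E - 1) * (‖v t‖ ^ 2 + ‖deriv v t‖ ^ 2)) (Ioi 0) :=
  (integrable_fun_norm_addHaar μ (f := fun t ↦ ‖v t‖ ^ 2 + ‖deriv v t‖ ^ 2)).1
    (integrable_norm_sq_add_norm_deriv_sq_of_radial huv hu hint)

lemma integral_Ioi_pow_mul_norm_sq_add_norm_deriv_sq_le_of_radial (huv : ∀ x, u x = v ‖x‖)
    (hu : Differentiable ℝ u)
    (hint : Integrable (fun x ↦ ‖u x‖ ^ 2 + ‖fderiv ℝ u x‖ ^ 2) μ) :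
    finrank ℝ E * μ.real (ball 0 1) *
        ∫ t in Ioi 0, t ^ (finrank ℝ E - 1) * (‖v t‖ ^ 2 + ‖deriv v t‖ ^ 2) ≤
      ∫ x, (‖u x‖ ^ 2 + ‖fderiv ℝ u x‖ ^ 2) ∂μ := by
  calc finrank ℝ E * μ.real (ball 0 1) *
        ∫ t in Ioi 0, t ^ (finrank ℝ E - 1) * (‖v t‖ ^ 2 + ‖deriv v t‖ ^ 2)
      = ∫ x, (‖v ‖x‖‖ ^ 2 + ‖deriv v ‖x‖‖ ^ 2) ∂μ := by
        rw [integral_fun_norm_addHaar μ fun t ↦ ‖v t‖ ^ 2 + ‖deriv v t‖ ^ 2]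
        simp only [nsmul_eq_mul, smul_eq_mul, mul_assoc]
    _ ≤ ∫ x, (‖u x‖ ^ 2 + ‖fderiv ℝ u x‖ ^ 2) ∂μ :=
        integral_mono_ae (integrable_norm_sq_add_norm_deriv_sq_of_radial huv hu hint) hint
          (ae_norm_sq_add_norm_deriv_sq_le_of_radial huv hu)

end RadialProfile

lemma integrable_norm_sq_add_norm_fderiv_sq_of_hasCompactSupport {E F : Type*}
    [NormedAddCommGroup E] [NormedSpace ℝ E] [MeasurableSpace E] [OpensMeasurableSpace E]
    [NormedAddCommGroup F] [NormedSpace ℝ F] {μ : Measure E} [IsFiniteMeasureOnCompacts μ]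
    {u : E → F} (hu : ContDiff ℝ 1 u) (hsupp : HasCompactSupport u) :
    Integrable (fun x ↦ ‖u x‖ ^ 2 + ‖fderiv ℝ u x‖ ^ 2) μ := by
  have hcont : Continuous fun x ↦ ‖u x‖ ^ 2 + ‖fderiv ℝ u x‖ ^ 2 :=
    (hu.continuous.norm.pow 2).add ((hu.continuous_fderiv one_ne_zero).norm.pow 2)
  refine hcont.integrable_of_hasCompactSupport (.add ?_ ?_)
  · exact hsupp.comp_left (g := fun y ↦ ‖y‖ ^ 2) (by simp)
  · exact (hsupp.fderiv ℝ).comp_left (g := fun L ↦ ‖L‖ ^ 2) (by simp)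

section Sobolev

open Set Metric Module

variable {E F : Type*} [NormedAddCommGroup E] [NormedSpace ℝ E] [FiniteDimensional ℝ E]
  [Nontrivial E] [MeasurableSpace E] [BorelSpace E] [NormedAddCommGroup F]
  [InnerProductSpace ℝ F] [CompleteSpace F] (μ : Measure E) [μ.IsAddHaarMeasure]

lemma pow_mul_norm_sq_le_integral_of_radial {u : E → F} {v : ℝ → F} (huv : ∀ x, u x = v ‖x‖)
    (hu : Differentiable ℝ u)
    (hint : Integrable (fun x ↦ ‖u x‖ ^ 2 + ‖fderiv ℝ u x‖ ^ 2) μ) {r : ℝ} (hr : 0 ≤ r) :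
    finrank ℝ E * μ.real (ball 0 1) * (r ^ (finrank ℝ E - 1) * ‖v r‖ ^ 2) ≤
      ∫ x, (‖u x‖ ^ 2 + ‖fderiv ℝ u x‖ ^ 2) ∂μ := by
  have hweight_mono : MonotoneOn (fun t : ℝ ↦ t ^ (finrank ℝ E - 1)) (Ici r) :=
    fun s hs t _ hst ↦ pow_le_pow_left₀ (hr.trans hs) hst _
  have hweighted_int :=
    integrableOn_Ioi_pow_mul_norm_sq_add_norm_deriv_sq_of_radial huv hu hint
  have hhalf_line : r ^ (finrank ℝ E - 1) * ‖v r‖ ^ 2 ≤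
      ∫ t in Ioi r, t ^ (finrank ℝ E - 1) * (‖v t‖ ^ 2 + ‖deriv v t‖ ^ 2) :=
    mul_norm_sq_le_integral_Ioi_of_monotoneOn hweight_mono (pow_nonneg hr _)
      ((continuousOn_Ici_of_radial huv hu.continuous r hr).mono (Ici_subset_Ici.2 hr))
      (fun t ht ↦ differentiableAt_of_radial huv hu (hr.trans_lt ht))
      (hweighted_int.mono_set (Ioi_subset_Ioi hr))
  have henlarge : ∫ t in Ioi r, t ^ (finrank ℝ E - 1) * (‖v t‖ ^ 2 + ‖deriv v t‖ ^ 2) ≤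
      ∫ t in Ioi 0, t ^ (finrank ℝ E - 1) * (‖v t‖ ^ 2 + ‖deriv v t‖ ^ 2) := by
    refine setIntegral_mono_set hweighted_int ?_ (Ioi_subset_Ioi hr).eventuallyLE
    filter_upwards [ae_restrict_mem measurableSet_Ioi] with t (ht : 0 < t)
    positivity
  calc finrank ℝ E * μ.real (ball 0 1) * (r ^ (finrank ℝ E - 1) * ‖v r‖ ^ 2)
      ≤ finrank ℝ E * μ.real (ball 0 1) *
          ∫ t in Ioi 0, t ^ (finrank ℝ E - 1) * (‖v t‖ ^ 2 + ‖deriv v t‖ ^ 2) := by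
        gcongr
        exact hhalf_line.trans henlarge
    _ ≤ ∫ x, (‖u x‖ ^ 2 + ‖fderiv ℝ u x‖ ^ 2) ∂μ :=
        integral_Ioi_pow_mul_norm_sq_add_norm_deriv_sq_le_of_radial huv hu hint

theorem radial_sobolev_estimate_general :
    ∃ C : ℝ, 0 < C ∧
      ∀ (u : E → F) (v : ℝ → F), Differentiable ℝ u →
        Integrable (fun x ↦ ‖u x‖ ^ 2 + ‖fderiv ℝ u x‖ ^ 2) μ → (∀ x, u x = v ‖x‖) →
        ∀ r : ℝ, 0 ≤ r →
          √(r ^ (finrank ℝ E - 1)) * ‖v r‖ ≤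
            C * √(∫ x, (‖u x‖ ^ 2 + ‖fderiv ℝ u x‖ ^ 2) ∂μ) := by
  set area : ℝ := finrank ℝ E * μ.real (ball 0 1)
  have harea : 0 < area := mul_pos (Nat.cast_pos.2 finrank_pos)
    (ENNReal.toReal_pos (measure_ball_pos μ 0 one_pos).ne' measure_ball_lt_top.ne)
  refine ⟨√area⁻¹, by positivity, fun u v hu hint huv r hr ↦ ?_⟩
  have hbound : area * (r ^ (finrank ℝ E - 1) * ‖v r‖ ^ 2) ≤
      ∫ x, (‖u x‖ ^ 2 + ‖fderiv ℝ u x‖ ^ 2) ∂μ :=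
    pow_mul_norm_sq_le_integral_of_radial μ huv hu hint hr
  rw [← Real.sqrt_mul (by positivity)]
  apply Real.le_sqrt_of_sq_le
  rwa [mul_pow, Real.sq_sqrt (by positivity), le_inv_mul_iff₀ harea]

end Sobolev

/-- Radial Sobolev estimate: there is a universal constant `C > 0` such that
for every smooth compactly supported radial function `u` on `ℝ³` with radial profile `v`,
`r |v(r)| ≤ C ‖u‖_{H¹(ℝ³)}` for all `r ≥ 0`. -/
theorem radial_sobolev_estimate :
    ∃ C : ℝ, 0 < C ∧
      ∀ (u : E3 → ℝ) (v : ℝ → ℝ),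
        ContDiff ℝ (⊤ : ℕ∞) u → HasCompactSupport u → (∀ x : E3, u x = v ‖x‖) →
        ∀ r : ℝ, 0 ≤ r →
          r * |v r| ≤ C * Real.sqrt (∫ x : E3, ((u x) ^ 2 + ‖gradient u x‖ ^ 2)) := by
  obtain ⟨C, hC, hbound⟩ := radial_sobolev_estimate_general (F := ℝ) (volume : Measure E3)
  refine ⟨C, hC, fun u v hu hsupp huv r hr ↦ ?_⟩
  have hu1 : ContDiff ℝ 1 u := hu.of_le (mod_cast le_top)
  simpa [gradient, Real.sqrt_sq hr] using hbound u v (hu1.differentiable one_ne_zero)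
    (integrable_norm_sq_add_norm_fderiv_sq_of_hasCompactSupport hu1 hsupp) huv r hr

end
end

section
/- Let q ∈ [−1,1] with q ≠ 0, and define the axion-monodromy potential F(s) = (1/q)·((1+s²)^{q/2} − 1) with derivative f(s) = F'(s) = s·(1+s²)^{q/2 − 1}. Then 2F(s) − s f(s) ≥ 0 for all s ∈ ℝ. -/
/-!
With `p = q / 2` and `x = 1 + s²`, the quantity `2F(s) - s f(s)` is
`(x ^ p - 1) / p - (x - 1) * x ^ (p - 1)`. For `p ≤ 1` the function `x ↦ (x ^ p - 1) / p` is
concave on `(0, ∞)` and vanishes at `1`, so its tangent line at `x` is nonnegative at `1`, which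
is the claim. Scaling by `x ^ p` reduces this to the tangent line at `1`, evaluated at `x⁻¹`, and
that case is Bernoulli's inequality.
-/

theorem one_add_mul_sub_one_le_rpow_of_nonpos {x p : ℝ} (hx : 0 < x) (hp : p ≤ 0) :
    1 + p * (x - 1) ≤ x ^ p :=
  calc
    1 + p * (x - 1) ≤ 1 + p * Real.log x := by
      gcongr 1 + ?_
      exact mul_le_mul_of_nonpos_left (Real.log_le_sub_one_of_pos hx) hp
    _ = Real.log x * p + 1 := by ring
    _ ≤ Real.exp (Real.log x * p) := Real.add_one_le_exp _
    _ = x ^ p := (Real.rpow_def_of_pos hx p).symm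

theorem rpow_sub_one_div_le_sub_one {x p : ℝ} (hx : 0 < x) (hp : p ≤ 1) (hp0 : p ≠ 0) :
    (x ^ p - 1) / p ≤ x - 1 := by
  rcases hp0.lt_or_gt with hneg | hpos
  · rw [div_le_iff_of_neg hneg]
    linarith [one_add_mul_sub_one_le_rpow_of_nonpos hx hneg.le]
  · have bernoulli : (1 + (x - 1)) ^ p ≤ 1 + p * (x - 1) :=
      rpow_one_add_le_one_add_mul_self (by linarith) hpos.le hp
    rw [add_sub_cancel] at bernoulli
    rw [div_le_iff₀ hpos]
    linarith

theorem sub_one_mul_rpow_sub_one_le_rpow_sub_one_div {x p : ℝ}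
    (hx : 0 < x) (hp : p ≤ 1) (hp0 : p ≠ 0) :
    (x - 1) * x ^ (p - 1) ≤ (x ^ p - 1) / p := by
  have bernoulli_inv : ((x ^ p)⁻¹ - 1) / p ≤ x⁻¹ - 1 := by
    rw [← Real.inv_rpow hx.le]
    exact rpow_sub_one_div_le_sub_one (inv_pos.mpr hx) hp hp0
  calc
    (x - 1) * x ^ (p - 1) = -(x ^ p * (x⁻¹ - 1)) := by
      rw [Real.rpow_sub_one hx.ne']
      field_simp
      ring
    _ ≤ -(x ^ p * (((x ^ p)⁻¹ - 1) / p)) := by gcongr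
    _ = (x ^ p - 1) / p := by
      field_simp
      ring

theorem axion_monodromy_defocusing_sign_general
    {q : ℝ} (hq : q ≤ 2) (hq0 : q ≠ 0) (s : ℝ) :
    0 ≤ 2 * ((1 / q) * ((1 + s ^ 2) ^ (q / 2) - 1))
        - s * (s * (1 + s ^ 2) ^ (q / 2 - 1)) := by
  have tangent : (1 + s ^ 2 - 1) * (1 + s ^ 2) ^ (q / 2 - 1)
      ≤ ((1 + s ^ 2) ^ (q / 2) - 1) / (q / 2) :=
    sub_one_mul_rpow_sub_one_le_rpow_sub_one_div (by positivity) (by linarith) (by positivity)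
  rw [sub_nonneg]
  convert tangent using 1
  · ring
  · field_simp

/-- The defocusing sign condition for the axion-monodromy potential
`F(s) = (1/q)((1+s²)^{q/2} - 1)` with `f(s) = s (1+s²)^{q/2-1}`, `q ∈ [-1,1]`, `q ≠ 0`:
for every real `s`, `2F(s) - s f(s) ≥ 0`. -/
theorem axion_monodromy_defocusing_sign
    (q : ℝ) (hq : q ∈ Set.Icc (-1 : ℝ) 1) (hq0 : q ≠ 0) (s : ℝ) :
    0 ≤ 2 * ((1 / q) * ((1 + s ^ 2) ^ (q / 2) - 1))
        - s * (s * (1 + s ^ 2) ^ (q / 2 - 1)) :=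
  axion_monodromy_defocusing_sign_general (hq.2.trans one_le_two) hq0 s
end
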